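/- For every q ≥ 2 and every ρ ∈ [0, 1/2], the limit β_q(ρ) := lim_{n→∞} (1/n) log_2 T_q(n; ⌊ρn⌋) exists and equals α_q(ρ) if ρ ≤ ρ* and α_q(ρ*) if ρ ≥ ρ*, where α_q(ρ) = (1−ρ)·H(ρ/(1−ρ)) + (1−ρ)·log_2(q) + ρ·log_2(q−1) and ρ* = (1/2)·(1 − √(q/(5q−4))). -/

import Mathlib

/-!
A set of locations that is valid and *effective* (every swap exchanges two distinct symbols) is
determined by `x` and the resulting string, since the smallest location where two such sets differ
shows up in the result; and discarding ineffective swaps does not change the result. Hence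
`T_q(n;r)` counts pairs `(x, K)` with `K` valid, effective for `x` and of size at most `r`. There
are `C(n-s,s)` valid sets of size `s`, each effective for `q^(n-s) (q-1)^s` strings, so
`T_q(n;r) = q^n ∑_{s ≤ r} C(n-s,s) w^s` with `w = (q-1)/q` (`Tq_eq`).

Let `σ = min ρ ρ*`. The term `s = ⌊σn⌋` gives the lower bound, by `log k! = k log k - k + O(log k)`
(`wsum_lower`). For the upper bound (`wsum_upper`), the binomial theorem with `p = σ/(1-σ)` gives
`C(n-s,s) p^s (1-p)^(n-2s) ≤ 1`, so the `s`-th term is at most `(1-p)^(-n) g^s` with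
`g = (1-2σ)² w / (σ(1-σ))`. The point `ρ*` is exactly where `g = 1`, and `g ≥ 1` for `σ ≤ ρ*`;
so either `ρ = σ` and `g^s ≤ g^(σn)`, or `g = 1`. In both cases the rate is `α_q(σ)`.
-/

/-- Valid locations (0-indexed) for simultaneous disjoint transpositions in a string of
length `n`: each location `k` swaps positions `k` and `k+1`, and distinct locations
are at distance at least 2. -/
def ValidLocs (n : ℕ) (K : Finset ℕ) : Prop :=
  (∀ k ∈ K, k + 1 < n) ∧ ∀ k ∈ K, ∀ l ∈ K, k ≠ l → k + 2 ≤ l ∨ l + 2 ≤ k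

/-- `y` is the result of applying the transpositions at the locations in `K` to `x`. -/
def ApplyLocs {n q : ℕ} (K : Finset ℕ) (x y : Fin n → Fin q) : Prop :=
  ∀ i : Fin n, y i =
    if h : (i : ℕ) ∈ K ∧ (i : ℕ) + 1 < n then x ⟨(i : ℕ) + 1, h.2⟩
    else if (i : ℕ) ≠ 0 ∧ (i : ℕ) - 1 ∈ K then
      x ⟨(i : ℕ) - 1, lt_of_le_of_lt (Nat.sub_le _ _) i.isLt⟩
    else x i

/-- `B(x;t)`: the set of strings obtainable from `x` by at most `t` disjoint transpositions. -/
def BallB {n q : ℕ} (t : ℕ) (x : Fin n → Fin q) : Set (Fin n → Fin q) :=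
  { y | ∃ K : Finset ℕ, K.card ≤ t ∧ ValidLocs n K ∧ ApplyLocs K x y }

/-- `dist(x,y) = min { t + s : B(x;t) ∩ B(y;s) ≠ ∅ }`, equal to `⊤` if no such `t,s` exist. -/
noncomputable def tdist {n q : ℕ} (x y : Fin n → Fin q) : ℕ∞ :=
  sInf { d : ℕ∞ | ∃ t s : ℕ, d = ((t + s : ℕ) : ℕ∞) ∧ (BallB t x ∩ BallB s y).Nonempty }

/-- A code `C` corrects `t` transpositions. -/
def Corrects {n q : ℕ} (t : ℕ) (C : Set (Fin n → Fin q)) : Prop :=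
  ∀ x ∈ C, ∀ x' ∈ C, x ≠ x' → BallB t x ∩ BallB t x' = ∅

/-- The number of runs of identical consecutive symbols in a string. -/
def runCount {n q : ℕ} (x : Fin n → Fin q) : ℕ :=
  if n = 0 then 0
  else 1 + (Finset.univ.filter (fun i : Fin (n - 1) =>
      x ⟨(i : ℕ), by have := i.isLt; omega⟩ ≠ x ⟨(i : ℕ) + 1, by have := i.isLt; omega⟩)).card

/-- `T_q(n;r) = Σ_x |B(x;r)|`. -/
noncomputable def Tq (q n r : ℕ) : ℕ :=
  ∑ x : Fin n → Fin q, (BallB r x).ncard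

/-- The binary entropy function `H(x) = -x log₂ x - (1-x) log₂ (1-x)` (with `H(0)=H(1)=0`). -/
noncomputable def binH (x : ℝ) : ℝ :=
  -(x * Real.logb 2 x) - (1 - x) * Real.logb 2 (1 - x)

/-- The exponent `α_q(ρ)`. -/
noncomputable def alphaFun (q : ℕ) (ρ : ℝ) : ℝ :=
  (1 - ρ) * binH (ρ / (1 - ρ)) + (1 - ρ) * Real.logb 2 q + ρ * Real.logb 2 ((q : ℝ) - 1)

/-- The maximizer `ρ* = (1/2)(1 - √(q/(5q-4)))` of `α_q`. -/
noncomputable def rhoStar (q : ℕ) : ℝ :=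
  (1 / 2) * (1 - Real.sqrt ((q : ℝ) / (5 * (q : ℝ) - 4)))


open Finset Filter Topology

/-! ### Reduction to effective location sets -/


/-- Location `k` is effective for `x`: swapping positions `k` and `k+1` changes `x`. -/
def Eff {n q : ℕ} (x : Fin n → Fin q) (k : ℕ) : Prop :=
  ∃ h : k + 1 < n, x ⟨k, Nat.lt_of_succ_lt h⟩ ≠ x ⟨k + 1, h⟩

/-- The string obtained from `x` by the transpositions at the locations in `K`. -/
def applyFun {n q : ℕ} (K : Finset ℕ) (x : Fin n → Fin q) : Fin n → Fin q := fun i =>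
    if h : (i : ℕ) ∈ K ∧ (i : ℕ) + 1 < n then x ⟨(i : ℕ) + 1, h.2⟩
    else if (i : ℕ) ≠ 0 ∧ (i : ℕ) - 1 ∈ K then
      x ⟨(i : ℕ) - 1, lt_of_le_of_lt (Nat.sub_le _ _) i.isLt⟩
    else x i

lemma applyLocs_iff {n q : ℕ} (K : Finset ℕ) (x y : Fin n → Fin q) :
    ApplyLocs K x y ↔ y = applyFun K x := by
  rw [funext_iff]; rfl

open Classical in
/-- The location sets counted by `|B(x;r)|`: valid, of size at most `r`, and effective. -/
noncomputable def effSets {n q : ℕ} (r : ℕ) (x : Fin n → Fin q) : Finset (Finset ℕ) :=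
  (range n).powerset.filter fun K => (#K ≤ r ∧ ValidLocs n K) ∧ ∀ k ∈ K, Eff x k

/-- At the smallest location in `K` but not in `L`, the string `applyFun L x` still agrees with
`x`, whereas `applyFun K x` does not. -/
lemma applyFun_injOn {n q : ℕ} (r : ℕ) (x : Fin n → Fin q) :
    Set.InjOn (fun K => applyFun K x) (effSets r x : Set (Finset ℕ)) := by
  have key : ∀ K ∈ effSets r x, ∀ L, applyFun K x = applyFun L x →
      ∀ k, (∀ j < k, j ∈ K ↔ j ∈ L) → k ∈ K → k ∈ L := by
    intro K hK L h k ih hk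
    by_contra hkL
    simp only [effSets, mem_filter] at hK
    obtain ⟨-, ⟨-, -, hV⟩, hE⟩ := hK
    obtain ⟨hkn, hne⟩ := hE k hk
    have h1 := congrFun h ⟨k, by omega⟩
    have h2 : ¬ (k ≠ 0 ∧ k - 1 ∈ L) := by
      rintro ⟨h0, hL⟩
      have := hV _ ((ih (k - 1) (by omega)).2 hL) _ hk (by omega)
      omega
    simp only [applyFun] at h1
    rw [dif_pos ⟨hk, hkn⟩, dif_neg (by tauto), if_neg h2] at h1
    exact hne h1.symm
  intro K hK L hL h
  ext k
  induction k using Nat.strong_induction_on with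
  | _ k ih => exact ⟨key K hK L h k ih, key L hL K h.symm k fun j hj => (ih j hj).symm⟩

open Classical in
/-- Dropping the ineffective locations from a location set does not change its action on `x`. -/
lemma ballB_eq {n q : ℕ} (r : ℕ) (x : Fin n → Fin q) :
    BallB r x = (fun K => applyFun K x) '' (effSets r x : Set (Finset ℕ)) := by
  ext y
  simp only [BallB, Set.mem_ofPred_eq, Set.mem_image, applyLocs_iff]
  constructor
  · rintro ⟨K, hc, hV, rfl⟩
    refine ⟨K.filter (Eff x), ?_, ?_⟩
    · simp only [effSets, coe_filter, Set.mem_ofPred_eq, mem_powerset]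
      refine ⟨fun k hk => ?_, ⟨(card_filter_le _ _).trans hc, ?_, ?_⟩, fun k hk => ?_⟩
      · have := hV.1 k (mem_of_mem_filter _ hk)
        simp; omega
      · exact fun k hk => hV.1 k (mem_of_mem_filter _ hk)
      · exact fun k hk l hl => hV.2 k (mem_of_mem_filter _ hk) l (mem_of_mem_filter _ hl)
      · exact (mem_filter.1 hk).2
    · funext ⟨i, hi⟩
      simp only [applyFun, mem_filter]
      by_cases h1 : i ∈ K
      · have hin := hV.1 i h1
        have h2 : ¬ (i ≠ 0 ∧ i - 1 ∈ K) := by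
          rintro ⟨h0, hL⟩
          have := hV.2 _ hL _ h1 (by omega)
          omega
        by_cases he : Eff x i
        · rw [dif_pos ⟨⟨h1, he⟩, hin⟩, dif_pos ⟨h1, hin⟩]
        · rw [dif_neg (by tauto), if_neg (by tauto), dif_pos ⟨h1, hin⟩]
          by_contra hne
          exact he ⟨hin, hne⟩
      · rw [dif_neg (by tauto), dif_neg (by tauto)]
        by_cases h2 : i ≠ 0 ∧ i - 1 ∈ K
        · rw [if_pos h2]
          by_cases he : Eff x (i - 1)
          · rw [if_pos (by tauto)]
          · rw [if_neg (by tauto)]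
            by_contra hne
            have e : i - 1 + 1 = i := by omega
            refine he ⟨by omega, fun h => hne ?_⟩
            rw [h]; congr 2; exact e.symm
        · rw [if_neg (by tauto), if_neg h2]
  · rintro ⟨K, hK, rfl⟩
    simp only [effSets, coe_filter, Set.mem_ofPred_eq, mem_powerset] at hK
    exact ⟨K, hK.2.1.1, hK.2.1.2, rfl⟩

lemma ncard_ballB {n q : ℕ} (r : ℕ) (x : Fin n → Fin q) :
    (BallB r x).ncard = #(effSets r x) := by
  rw [ballB_eq, Set.InjOn.ncard_image (applyFun_injOn r x), Set.ncard_coe_finset]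

lemma eff_snoc_of_lt {n q : ℕ} (x : Fin n → Fin q) (a : Fin q) {k : ℕ} (hk : k + 1 < n) :
    Eff (Fin.snoc x a : Fin (n + 1) → Fin q) k ↔ Eff x k := by
  unfold Eff
  simp [Fin.snoc, hk, Nat.lt_of_succ_lt hk, Nat.lt_succ_of_lt hk]

lemma eff_snoc_last {n q : ℕ} (x : Fin (n + 1) → Fin q) (a : Fin q) :
    Eff (Fin.snoc x a : Fin (n + 1 + 1) → Fin q) n ↔ a ≠ x (Fin.last n) := by
  unfold Eff
  simp [Fin.snoc, Fin.last, eq_comm]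

/-! ### Counting pairs of strings and location sets -/

open Classical in
/-- The symbols of a string can be chosen from left to right; each `k ∈ K` excludes exactly one
choice for the symbol at position `k+1`. -/
lemma card_eff {q : ℕ} (n : ℕ) (K : Finset ℕ) (hK : ∀ k ∈ K, k + 1 < n) :
    #{x : Fin n → Fin q | ∀ k ∈ K, Eff x k} * q ^ #K = q ^ n * (q - 1) ^ #K := by
  induction n generalizing K with
  | zero =>
    have : K = ∅ := eq_empty_of_forall_notMem fun k hk => by have := hK k hk; omega
    subst this; simp
  | succ n ih =>
    have hcard : ∀ L : Finset ℕ, (#{x : Fin (n + 1) → Fin q | ∀ k ∈ L, Eff x k}) =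
        ∑ x : Fin n → Fin q, #{a : Fin q | ∀ k ∈ L,
          Eff (Fin.snoc x a : Fin (n + 1) → Fin q) k} := by
      intro L
      simp only [card_filter]
      rw [← (Fin.snocEquiv (fun _ : Fin (n + 1) => Fin q)).sum_comp, Fintype.sum_prod_type_right]
      rfl
    rw [hcard]
    by_cases hm : ∃ m ∈ K, m + 1 = n
    · obtain ⟨m, hmK, rfl⟩ := hm
      have ihm := ih (K.erase m) fun k hk => by
        have h1 := hK k (mem_of_mem_erase hk)
        have h2 := ne_of_mem_erase hk
        omega
      have hs : ∀ x : Fin (m + 1) → Fin q, #{a : Fin q | ∀ k ∈ K,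
          Eff (Fin.snoc x a : Fin (m + 1 + 1) → Fin q) k} =
          if ∀ k ∈ K.erase m, Eff x k then q - 1 else 0 := by
        intro x
        have hiff : ∀ a, (∀ k ∈ K, Eff (Fin.snoc x a : Fin (m + 1 + 1) → Fin q) k) ↔
            a ≠ x (Fin.last m) ∧ ∀ k ∈ K.erase m, Eff x k := by
          intro a
          conv_lhs => rw [← insert_erase hmK]
          rw [forall_mem_insert, eff_snoc_last]
          refine and_congr_right fun _ => forall₂_congr fun k hk => eff_snoc_of_lt x a ?_
          have h1 := hK k (mem_of_mem_erase hk)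
          have h2 := ne_of_mem_erase hk
          omega
        simp only [hiff]
        split_ifs with h
        · simp only [eq_true h, and_true]
          rw [filter_ne', card_erase_of_mem (mem_univ _)]; simp
        · simp only [eq_false h, and_false, filter_false, card_empty]
      simp only [hs]
      rw [← sum_filter, sum_const, smul_eq_mul, ← card_erase_add_one hmK, pow_succ, pow_succ q (m+1),
        pow_succ (q-1)]
      linear_combination (q * (q - 1 : ℕ)) * ihm
    · have hlt : ∀ k ∈ K, k + 1 < n := fun k hk => by
        have h1 := hK k hk
        have : k + 1 ≠ n := fun h => hm ⟨k, hk, h⟩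
        omega
      have hs : ∀ x : Fin n → Fin q, #{a : Fin q | ∀ k ∈ K,
          Eff (Fin.snoc x a : Fin (n + 1) → Fin q) k} =
          if ∀ k ∈ K, Eff x k then q else 0 := by
        intro x
        have hiff : ∀ a, (∀ k ∈ K, Eff (Fin.snoc x a : Fin (n + 1) → Fin q) k) ↔
            ∀ k ∈ K, Eff x k :=
          fun a => forall₂_congr fun k hk => eff_snoc_of_lt x a (hlt k hk)
        simp only [hiff]
        split_ifs with h
        · simp only [eq_true h, filter_true, card_univ, Fintype.card_fin]
        · simp only [eq_false h, filter_false, card_empty]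
      simp only [hs]
      rw [← sum_filter, sum_const, smul_eq_mul, pow_succ]
      linear_combination q * ih K hlt

open Classical in
/-- The valid location sets of size `s` for strings of length `n`. -/
noncomputable def validSets (n s : ℕ) : Finset (Finset ℕ) :=
  (range n).powerset.filter fun K => #K = s ∧ ValidLocs n K

lemma mem_validSets {n s : ℕ} {K : Finset ℕ} : K ∈ validSets n s ↔ #K = s ∧ ValidLocs n K := by
  simp only [validSets, mem_filter, mem_powerset, and_iff_right_iff_imp]
  intro h k hk
  have := h.2.1 k hk
  simp; omega

lemma card_validSets_zero (n : ℕ) : #(validSets n 0) = 1 := by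
  rw [card_eq_one]
  refine ⟨∅, ?_⟩
  ext K
  simp only [mem_validSets, card_eq_zero, mem_singleton, and_iff_left_iff_imp]
  rintro rfl
  simp [ValidLocs]

lemma card_validSets_small (n s : ℕ) (hn : n < 2) : #(validSets n (s + 1)) = 0 := by
  rw [card_eq_zero]
  refine eq_empty_of_forall_notMem fun K hK => ?_
  rw [mem_validSets] at hK
  obtain ⟨k, hk⟩ := card_pos.1 (by omega : 0 < #K)
  have := hK.2.1 k hk
  omega

/-- A valid set either avoids the last location `n`, or is a valid set for length `n`
together with `n`. -/
lemma card_validSets_rec (n s : ℕ) :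
    #(validSets (n + 2) (s + 1)) = #(validSets (n + 1) (s + 1)) + #(validSets n s) := by
  classical
  rw [← card_filter_add_card_filter_not (s := validSets (n + 2) (s + 1)) (fun K => n ∉ K)]
  congr 1
  · congr 1
    ext K
    simp only [mem_filter, mem_validSets, ValidLocs]
    constructor
    · rintro ⟨⟨h1, h2, h3⟩, h4⟩
      refine ⟨h1, fun k hk => ?_, h3⟩
      have := h2 k hk
      have : k ≠ n := fun h => h4 (h ▸ hk)
      omega
    · rintro ⟨h1, h2, h3⟩
      refine ⟨⟨h1, fun k hk => ?_, h3⟩, fun h => ?_⟩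
      · have := h2 k hk; omega
      · have := h2 n h; omega
  · refine card_nbij' (fun K => K.erase n) (fun K => insert n K) ?_ ?_ ?_ ?_
    · intro K hK
      simp only [coe_filter, Set.mem_ofPred_eq, mem_validSets, not_not] at hK
      obtain ⟨⟨h1, h2, h3⟩, h4⟩ := hK
      rw [mem_coe, mem_validSets]
      refine ⟨by rw [card_erase_of_mem h4]; omega, fun k hk => ?_, fun k hk l hl => ?_⟩
      · have a := h2 k (mem_of_mem_erase hk)
        have b := h3 k (mem_of_mem_erase hk) n h4 (ne_of_mem_erase hk)
        omega
      · exact h3 k (mem_of_mem_erase hk) l (mem_of_mem_erase hl)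
    · intro K hK
      rw [mem_coe, mem_validSets] at hK
      obtain ⟨h1, h2, h3⟩ := hK
      have hn : n ∉ K := fun h => by have := h2 n h; omega
      simp only [coe_filter, Set.mem_ofPred_eq, mem_validSets, not_not]
      refine ⟨⟨by rw [card_insert_of_notMem hn, h1], fun k hk => ?_, fun k hk l hl hkl => ?_⟩,
        mem_insert_self _ _⟩
      · rcases mem_insert.1 hk with rfl | hk
        · omega
        · have := h2 k hk; omega
      · rcases mem_insert.1 hk with rfl | hk' <;> rcases mem_insert.1 hl with rfl | hl'
        · exact absurd rfl hkl
        · have := h2 l hl'; omega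
        · have := h2 k hk'; omega
        · exact h3 k hk' l hl' hkl
    · intro K hK
      simp only [coe_filter, Set.mem_ofPred_eq, not_not] at hK
      exact insert_erase hK.2
    · intro K hK
      rw [mem_coe, mem_validSets] at hK
      exact erase_insert fun h => by have := hK.2.1 n h; omega

lemma card_validSets (n s : ℕ) : #(validSets n s) = (n - s).choose s := by
  induction n using Nat.strong_induction_on generalizing s with
  | _ n ih =>
    match n, s with
    | n, 0 => simp [card_validSets_zero]
    | 0, s + 1 => rw [card_validSets_small _ _ (by omega)]; simp
    | 1, s + 1 => rw [card_validSets_small _ _ (by omega)]; simp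
    | n + 2, s + 1 =>
      rw [card_validSets_rec, ih (n + 1) (by omega), ih n (by omega)]
      rcases le_or_gt s n with h | h
      · rw [show n + 2 - (s + 1) = n - s + 1 by omega, Nat.choose_succ_succ,
          show n + 1 - (s + 1) = n - s by omega, add_comm]
      · rw [Nat.choose_eq_zero_of_lt (by omega), Nat.choose_eq_zero_of_lt (by omega),
          Nat.choose_eq_zero_of_lt (by omega)]

/-- Closed form of `T_q(n;r)`, by exchanging the sum over strings with that over location sets. -/
lemma Tq_eq (q n r : ℕ) (hq : 2 ≤ q) :
    (Tq q n r : ℝ) = (q : ℝ) ^ n *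
      ∑ s ∈ range (r + 1), ((n - s).choose s : ℝ) * (((q : ℝ) - 1) / q) ^ s := by
  classical
  have hq0 : (q : ℝ) ≠ 0 := by positivity
  have h1 : Tq q n r = ∑ K ∈ (range n).powerset with #K ≤ r ∧ ValidLocs n K,
      #{x : Fin n → Fin q | ∀ k ∈ K, Eff x k} := by
    simp only [Tq, ncard_ballB, effSets]
    simp only [← filter_filter, card_filter (fun K : Finset ℕ => ∀ k ∈ K, Eff _ k)]
    rw [sum_comm]
    simp only [card_filter]
  have h2 : ∀ K ∈ (range n).powerset.filter (fun K => #K ≤ r ∧ ValidLocs n K),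
      ((#{x : Fin n → Fin q | ∀ k ∈ K, Eff x k} : ℕ) : ℝ) =
        (q : ℝ) ^ n * (((q : ℝ) - 1) / q) ^ #K := by
    intro K hK
    have := card_eff (q := q) n K (mem_filter.1 hK).2.2.1
    have h3 : ((#{x : Fin n → Fin q | ∀ k ∈ K, Eff x k} : ℕ) : ℝ) * (q : ℝ) ^ #K =
        (q : ℝ) ^ n * ((q : ℝ) - 1) ^ #K := by
      have h4 := congrArg (Nat.cast (R := ℝ)) this
      push_cast [Nat.cast_sub (show 1 ≤ q by omega)] at h4
      exact h4
    rw [div_pow, ← mul_div_assoc, ← h3, mul_div_cancel_right₀ _ (by positivity)]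
  rw [h1, Nat.cast_sum, sum_congr rfl h2, ← mul_sum]
  congr 1
  rw [← sum_fiberwise_of_maps_to (s := (range n).powerset.filter _) (t := range (r + 1)) (g := card)
    (fun K hK => by have := (mem_filter.1 hK).2.1; simp; omega)]
  refine sum_congr rfl fun s hs => ?_
  rw [sum_congr rfl (g := fun _ => (((q : ℝ) - 1) / q) ^ s)
    (fun K hK => by rw [(mem_filter.1 hK).2]), sum_const, nsmul_eq_mul, ← card_validSets]
  congr 3
  ext K
  simp only [mem_filter, validSets, mem_range] at hs ⊢
  constructor
  · rintro ⟨⟨a, b, c⟩, d⟩; exact ⟨a, d, c⟩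
  · rintro ⟨a, b, c⟩; exact ⟨⟨a, by omega, c⟩, b⟩

/-! ### Asymptotics of the summands -/

/-- The exponent of `C(n-s,s)` when `s/n → σ`, in nats. -/
noncomputable def chooseExp (σ : ℝ) : ℝ :=
  Real.negMulLog σ + Real.negMulLog (1 - 2 * σ) - Real.negMulLog (1 - σ)

/-- `log k! = k log k - k + O(log k)`, with explicit constants. -/
lemma log_factorial_bounds (k : ℕ) :
    0 ≤ Real.log (k.factorial) - (k * Real.log k - k) ∧
    Real.log (k.factorial) - (k * Real.log k - k) ≤ 1 + Real.log (k + 1) := by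
  have key : ∀ k : ℕ, 0 ≤ Real.log ((k + 1).factorial) -
      ((k + 1 : ℕ) * Real.log (k + 1 : ℕ) - (k + 1 : ℕ)) ∧
      Real.log ((k + 1).factorial) - ((k + 1 : ℕ) * Real.log (k + 1 : ℕ) - (k + 1 : ℕ))
        ≤ 1 + Real.log (k + 1) := by
    intro k
    induction k with
    | zero => simp
    | succ k ih =>
      have hk : (0 : ℝ) < k + 1 := by positivity
      have hk2 : (0 : ℝ) < k + 2 := by positivity
      have e1 : Real.log ((k + 1 + 1).factorial) =
          Real.log (k + 2) + Real.log ((k + 1).factorial) := by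
        rw [Nat.factorial_succ (k + 1)]
        push_cast
        rw [Real.log_mul (by positivity) (by positivity)]
        congr 2; ring
      have a := Real.log_le_sub_one_of_pos (x := (k + 2) / (k + 1)) (by positivity)
      have b := Real.one_sub_inv_le_log_of_pos (x := (k + 2) / (k + 1)) (by positivity)
      rw [Real.log_div (by positivity) (by positivity)] at a b
      set L2 := Real.log ((k : ℝ) + 2)
      set L1 := Real.log ((k : ℝ) + 1)
      have a' : (k + 1) * (L2 - L1) ≤ 1 := by
        have : ((k : ℝ) + 2) / (k + 1) - 1 = 1 / (k + 1) := by field_simp; ring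
        rw [this, le_div_iff₀ hk] at a; linarith
      have b' : 1 ≤ (k + 2) * (L2 - L1) := by
        have : 1 - (((k : ℝ) + 2) / (k + 1))⁻¹ = 1 / (k + 2) := by field_simp; ring
        rw [this, div_le_iff₀ hk2] at b; linarith
      rw [e1]
      push_cast at ih ⊢
      rw [show (k : ℝ) + 1 + 1 = k + 2 by ring]
      constructor <;> nlinarith [ih.1, ih.2]
  rcases k with _ | k
  · simp
  · refine ⟨(key k).1, (key k).2.trans ?_⟩
    push_cast
    gcongr
    linarith

lemma tendsto_log_div : Tendsto (fun n : ℕ => Real.log (n + 1) / n) atTop (𝓝 0) := by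
  have h1 : Tendsto (fun x : ℝ => Real.log x / (1 * x + (-1))) atTop (𝓝 0) := by
    have := Real.tendsto_pow_log_div_mul_add_atTop 1 (-1) 1 one_ne_zero
    simpa using this
  have h2 : Tendsto (fun n : ℕ => (n : ℝ) + 1) atTop atTop :=
    tendsto_atTop_add_const_right _ _ tendsto_natCast_atTop_atTop
  refine (h1.comp h2).congr fun n => ?_
  simp

lemma log_choose_lower (n s : ℕ) (hn : 0 < n) (hs : 2 * s ≤ n) :
    chooseExp ((s : ℝ) / n) - 2 * (1 + Real.log (n + 1)) / n ≤
      Real.log ((n - s).choose s) / n := by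
  have hn' : (0 : ℝ) < n := by exact_mod_cast hn
  have hfac := Nat.choose_mul_factorial_mul_factorial (show s ≤ n - s by omega)
  rw [show n - s - s = n - 2 * s by omega] at hfac
  have hlog : Real.log ((n - s).choose s) + Real.log (s.factorial) +
      Real.log ((n - 2 * s).factorial) = Real.log ((n - s).factorial) := by
    rw [← hfac]
    have : 0 < (n - s).choose s := Nat.choose_pos (by omega)
    push_cast
    rw [Real.log_mul (by positivity) (by positivity), Real.log_mul (by positivity) (by positivity)]
  have b1 := (log_factorial_bounds s).2
  have b2 := (log_factorial_bounds (n - 2 * s)).2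
  have b3 := (log_factorial_bounds (n - s)).1
  have m1 : Real.log (s + 1) ≤ Real.log (n + 1) := by
    gcongr; omega
  have m2 : Real.log ((n - 2 * s : ℕ) + 1) ≤ Real.log (n + 1) := by
    gcongr; omega
  have c1 : ((n - 2 * s : ℕ) : ℝ) = n - 2 * s := by push_cast [Nat.cast_sub hs]; ring
  have c2 : ((n - s : ℕ) : ℝ) = n - s := by push_cast [Nat.cast_sub (show s ≤ n by omega)]; ring
  -- `negMulLog` is homogeneous up to a linear term, and those terms cancel.
  have hom : ∀ a : ℕ, n * Real.negMulLog ((a : ℝ) / n) = a * Real.log n - a * Real.log a := by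
    intro a
    rcases Nat.eq_zero_or_pos a with rfl | ha
    · simp
    · have ha' : (0 : ℝ) < a := by exact_mod_cast ha
      rw [Real.negMulLog, Real.log_div ha'.ne' hn'.ne']
      field_simp
      ring
  have e1 := hom s
  have e2 := hom (n - 2 * s)
  have e3 := hom (n - s)
  have f2 : ((n - 2 * s : ℕ) : ℝ) / n = 1 - 2 * (s / n) := by rw [c1]; field_simp
  have f3 : ((n - s : ℕ) : ℝ) / n = 1 - s / n := by rw [c2]; field_simp
  rw [f2] at e2
  rw [f3] at e3
  rw [le_div_iff₀ hn', sub_mul, div_mul_cancel₀ _ hn'.ne', chooseExp]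
  have lin : ((n - s : ℕ) : ℝ) * Real.log n =
      s * Real.log n + ((n - 2 * s : ℕ) : ℝ) * Real.log n := by rw [c1, c2]; ring
  have lin2 : ((n - s : ℕ) : ℝ) = s + ((n - 2 * s : ℕ) : ℝ) := by rw [c1, c2]; ring
  linarith

/-- `α_q` in nats, split as `log q + chooseExp + σ log((q-1)/q)`. -/
lemma alphaFun_eq (q : ℕ) (hq : 2 ≤ q) (σ : ℝ) (h0 : 0 ≤ σ) (h1 : σ ≤ 1 / 2) :
    alphaFun q σ * Real.log 2 =
      Real.log q + (chooseExp σ + σ * Real.log (((q : ℝ) - 1) / q)) := by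
  have hq1 : (0 : ℝ) < (q : ℝ) - 1 := by
    have : (2 : ℝ) ≤ q := by exact_mod_cast hq
    linarith
  have hq0 : (0 : ℝ) < q := by linarith
  have hl2 : Real.log 2 ≠ 0 := (Real.log_pos (by norm_num)).ne'
  have hσ : (0 : ℝ) < 1 - σ := by linarith
  have e1 : 1 - σ / (1 - σ) = (1 - 2 * σ) / (1 - σ) := by field_simp; ring
  have A : σ * Real.log (σ / (1 - σ)) = σ * Real.log σ - σ * Real.log (1 - σ) := by
    rcases h0.eq_or_lt with h | h
    · simp [← h]
    · rw [Real.log_div h.ne' hσ.ne']; ring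
  have B : (1 - 2 * σ) * Real.log ((1 - 2 * σ) / (1 - σ)) =
      (1 - 2 * σ) * Real.log (1 - 2 * σ) - (1 - 2 * σ) * Real.log (1 - σ) := by
    rcases (show 0 ≤ 1 - 2 * σ by linarith).eq_or_lt with h | h
    · simp [← h]
    · rw [Real.log_div h.ne' hσ.ne']; ring
  have C : (1 - σ) * binH (σ / (1 - σ)) * Real.log 2 =
      -(σ * Real.log (σ / (1 - σ))) - (1 - 2 * σ) * Real.log ((1 - 2 * σ) / (1 - σ)) := by
    rw [binH, e1]
    simp only [Real.logb]
    field_simp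
  rw [alphaFun, add_mul, add_mul, C, A, B, Real.log_div hq1.ne' hq0.ne', chooseExp]
  simp only [Real.logb, Real.negMulLog]
  field_simp
  ring

/-- A single binomial probability, that of `s` successes in `n - s` trials, is at most `1`. -/
lemma choose_le_of_prob (n s : ℕ) (p : ℝ) (hp0 : 0 < p) (hp1 : p < 1) :
    ((n - s).choose s : ℝ) ≤ ((1 - p)⁻¹) ^ n * ((1 - p) ^ 2 / p) ^ s := by
  have hp : 0 < 1 - p := by linarith
  rcases lt_or_ge n (2 * s) with h | h
  · rw [Nat.choose_eq_zero_of_lt (by omega)]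
    simp only [Nat.cast_zero]; positivity
  · have h1 : p ^ s * (1 - p) ^ (n - s - s) * ((n - s).choose s : ℝ) ≤ 1 := by
      have h2 := add_pow p (1 - p) (n - s)
      rw [add_sub_cancel, one_pow] at h2
      refine le_of_le_of_eq ?_ h2.symm
      exact single_le_sum (f := fun m => p ^ m * (1 - p) ^ (n - s - m) * ((n - s).choose m : ℝ))
        (fun i _ => by positivity) (mem_range.2 (show s < n - s + 1 by omega))
    obtain ⟨m, rfl⟩ := Nat.exists_eq_add_of_le h
    rw [show 2 * s + m - s - s = m by omega] at h1
    have e : ((1 - p)⁻¹) ^ (2 * s + m) * ((1 - p) ^ 2 / p) ^ s = (p ^ s * (1 - p) ^ m)⁻¹ := by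
      rw [pow_add, pow_mul, div_pow, inv_pow, inv_pow, inv_pow]
      field_simp
    rw [e, ← one_div, le_div_iff₀ (by positivity)]
    linarith

/-! ### Growth rate of the sum -/

/-- The normalised weight `T_q(n;r) / q^n = ∑_{s ≤ r} C(n-s,s) w^s`, with `w = (q-1)/q`. -/
noncomputable def wsum (w : ℝ) (n r : ℕ) : ℝ :=
  ∑ s ∈ range (r + 1), ((n - s).choose s : ℝ) * w ^ s

lemma wsum_ge {w : ℝ} (hw : 0 < w) {n r s : ℕ} (hs : s ≤ r) :
    ((n - s).choose s : ℝ) * w ^ s ≤ wsum w n r :=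
  single_le_sum (f := fun s => ((n - s).choose s : ℝ) * w ^ s)
    (fun i _ => by positivity) (mem_range.2 (by omega))

lemma wsum_pos {w : ℝ} (hw : 0 < w) (n r : ℕ) : 0 < wsum w n r :=
  lt_of_lt_of_le one_pos (by simpa using wsum_ge hw (n := n) (Nat.zero_le r))

/-- Lower bound from the single term `s = ⌊σn⌋`. -/
lemma wsum_lower {w σ : ℝ} (hw : 0 < w) (h0 : 0 ≤ σ) (h1 : σ ≤ 1 / 2) {n r : ℕ} (hn : 0 < n)
    (hr : ⌊σ * n⌋₊ ≤ r) :
    chooseExp ((⌊σ * n⌋₊ : ℝ) / n) - 2 * (1 + Real.log (n + 1)) / n +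
      (⌊σ * n⌋₊ : ℝ) / n * Real.log w ≤ Real.log (wsum w n r) / n := by
  have hn' : (0 : ℝ) < n := by exact_mod_cast hn
  set s := ⌊σ * n⌋₊ with hs
  have hsle : (s : ℝ) ≤ σ * n := Nat.floor_le (by positivity)
  have h2s : 2 * s ≤ n := by
    have : (2 * s : ℝ) ≤ n := by nlinarith
    exact_mod_cast this
  have hc : 0 < (n - s).choose s := Nat.choose_pos (by omega)
  have hlog := Real.log_le_log (by positivity) (wsum_ge hw (n := n) hr)
  rw [Real.log_mul (by positivity) (by positivity), Real.log_pow] at hlog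
  have := log_choose_lower n s hn h2s
  calc _ ≤ Real.log ((n - s).choose s) / n + (s : ℝ) / n * Real.log w := by linarith
    _ = (Real.log ((n - s).choose s) + s * Real.log w) / n := by ring
    _ ≤ _ := by gcongr

/-- Upper bound: tilting by `p = σ/(1-σ)` bounds each summand by `(1-p)^{-n} g^s`, where
`g = (1-p)²w/p ≥ 1`, and `g^s ≤ g^{σn}` for all `s ≤ r`. -/
lemma wsum_upper {w σ : ℝ} (hw : 0 < w) (h0 : 0 < σ) (h1 : σ < 1 / 2) {n r : ℕ} (hn : 0 < n)
    (hrn : r ≤ n) (hg : σ * (1 - σ) ≤ (1 - 2 * σ) ^ 2 * w)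
    (hr : (r : ℝ) ≤ σ * n ∨ σ * (1 - σ) = (1 - 2 * σ) ^ 2 * w) :
    Real.log (wsum w n r) / n ≤ Real.log (n + 1) / n + (chooseExp σ + σ * Real.log w) := by
  have hn' : (0 : ℝ) < n := by exact_mod_cast hn
  have hσ1 : 0 < 1 - σ := by linarith
  have hσ2 : 0 < 1 - 2 * σ := by linarith
  obtain ⟨p, hp⟩ : ∃ p, p = σ / (1 - σ) := ⟨_, rfl⟩
  have hp0 : 0 < p := by rw [hp]; positivity
  have hp1 : p < 1 := by rw [hp, div_lt_one hσ1]; linarith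
  have h1p : 1 - p = (1 - 2 * σ) / (1 - σ) := by rw [hp]; field_simp; ring
  have h1p0 : 0 < 1 - p := by linarith
  obtain ⟨g, hgd⟩ : ∃ g, g = (1 - p) ^ 2 / p * w := ⟨_, rfl⟩
  have hg' : g = (1 - 2 * σ) ^ 2 * w / (σ * (1 - σ)) := by
    rw [hgd, h1p, hp]; field_simp
  have hg1 : 1 ≤ g := by rw [hg', one_le_div (by positivity)]; exact hg
  have hlg : 0 ≤ Real.log g := Real.log_nonneg hg1
  have hterm : ∀ s ∈ range (r + 1), ((n - s).choose s : ℝ) * w ^ s ≤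
      ((1 - p)⁻¹) ^ n * g ^ r := by
    intro s hs
    calc ((n - s).choose s : ℝ) * w ^ s
        ≤ ((1 - p)⁻¹) ^ n * ((1 - p) ^ 2 / p) ^ s * w ^ s := by
          gcongr; exact choose_le_of_prob n s p hp0 hp1
      _ = ((1 - p)⁻¹) ^ n * g ^ s := by rw [hgd, mul_pow]; ring
      _ ≤ _ := by
          have := mem_range.1 hs
          gcongr
          omega
  have hsum : wsum w n r ≤ (n + 1) * (((1 - p)⁻¹) ^ n * g ^ r) := by
    refine (sum_le_card_nsmul _ _ _ hterm).trans ?_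
    rw [card_range, nsmul_eq_mul]
    have : ((r + 1 : ℕ) : ℝ) ≤ n + 1 := by exact_mod_cast Nat.succ_le_succ hrn
    gcongr
  have hlog := Real.log_le_log (wsum_pos hw n r) hsum
  rw [Real.log_mul (by positivity) (by positivity), Real.log_mul (by positivity) (by positivity),
    Real.log_pow, Real.log_pow, Real.log_inv] at hlog
  have hrg : r * Real.log g ≤ σ * n * Real.log g := by
    rcases hr with hr | hr
    · gcongr
    · have : g = 1 := by rw [hg', ← hr]; exact div_self (by positivity)
      simp [this]
  have hval : chooseExp σ + σ * Real.log w = -Real.log (1 - p) + σ * Real.log g := by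
    rw [hg', h1p, Real.log_div (by positivity) (by positivity), Real.log_div (by positivity)
      (by positivity), Real.log_mul (by positivity) (by positivity),
      Real.log_mul (by positivity) (by positivity), Real.log_pow, chooseExp]
    simp only [Real.negMulLog]
    push_cast
    ring
  rw [hval, div_le_iff₀ hn', add_mul, div_mul_cancel₀ _ hn'.ne']
  nlinarith

/-- The exponential growth rate of `wsum` along `r = ⌊ρn⌋`, at an abstract threshold: `σ` is `ρ`
or the maximiser, the latter being characterised by `σ(1-σ) = (1-2σ)²w`. -/
lemma tendsto_wsum {w ρ σ : ℝ} (hw : 0 < w) (hρ : ρ ≤ 1 / 2) (h0 : 0 ≤ σ) (h1 : σ ≤ ρ)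
    (hσ : σ < 1 / 2)
    (hg : σ * (1 - σ) ≤ (1 - 2 * σ) ^ 2 * w)
    (hr : ρ = σ ∨ σ * (1 - σ) = (1 - 2 * σ) ^ 2 * w) :
    Tendsto (fun n : ℕ => Real.log (wsum w n ⌊ρ * n⌋₊) / n) atTop
      (𝓝 (chooseExp σ + σ * Real.log w)) := by
  have hfl : Tendsto (fun n : ℕ => (⌊σ * n⌋₊ : ℝ) / n) atTop (𝓝 σ) :=
    (tendsto_nat_floor_mul_div_atTop h0).comp tendsto_natCast_atTop_atTop
  have hcont : Continuous chooseExp := by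
    unfold chooseExp
    have := Real.continuous_negMulLog
    fun_prop
  have herr : Tendsto (fun n : ℕ => 2 * (1 + Real.log (n + 1)) / n) atTop (𝓝 0) := by
    have := ((tendsto_const_div_atTop_nhds_zero_nat (1 : ℝ)).add tendsto_log_div).const_mul 2
    simp only [add_zero, mul_zero] at this
    exact this.congr fun n => by ring
  have hlow : Tendsto (fun n : ℕ => chooseExp ((⌊σ * n⌋₊ : ℝ) / n) -
      2 * (1 + Real.log (n + 1)) / n + (⌊σ * n⌋₊ : ℝ) / n * Real.log w) atTop
      (𝓝 (chooseExp σ + σ * Real.log w)) := by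
    have := (((hcont.tendsto σ).comp hfl).sub herr).add (hfl.mul_const (Real.log w))
    simpa using this
  have hup : Tendsto (fun n : ℕ => Real.log (n + 1) / n + (chooseExp σ + σ * Real.log w)) atTop
      (𝓝 (chooseExp σ + σ * Real.log w)) := by
    simpa using tendsto_log_div.add_const (chooseExp σ + σ * Real.log w)
  refine tendsto_of_tendsto_of_tendsto_of_le_of_le' hlow hup ?_ ?_
  · filter_upwards [eventually_gt_atTop 0] with n hn
    refine wsum_lower hw h0 (by linarith) hn (Nat.floor_mono ?_)
    gcongr
  · filter_upwards [eventually_gt_atTop 0] with n hn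
    rcases h0.eq_or_lt with h | h
    · -- `σ = 0` forces `ρ = 0`, so only the term `s = 0` is present.
      have hρ0 : ρ = 0 := by
        rcases hr with hr | hr
        · rw [hr, h]
        · rw [← h] at hr; norm_num at hr; exact absurd hr hw.ne
      have : 0 ≤ Real.log ((n : ℝ) + 1) := Real.log_nonneg (by linarith [n.cast_nonneg (α := ℝ)])
      simp only [hρ0, ← h, wsum, chooseExp]
      simp
      positivity
    · have hρn : 0 ≤ ρ * n := by have := h.le.trans h1; positivity
      refine wsum_upper hw h hσ hn ?_ hg ?_
      · refine Nat.floor_le_of_le ?_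
        nlinarith [n.cast_nonneg (α := ℝ)]
      · refine hr.imp (fun e => ?_) id
        rw [← e]
        exact Nat.floor_le hρn

lemma rhoStar_spec (q : ℕ) (hq : 2 ≤ q) : 0 < rhoStar q ∧ rhoStar q < 1 / 2 ∧
    rhoStar q * (1 - rhoStar q) = (1 - 2 * rhoStar q) ^ 2 * (((q : ℝ) - 1) / q) := by
  have hq2 : (2 : ℝ) ≤ q := by exact_mod_cast hq
  have hd : (0 : ℝ) < 5 * q - 4 := by linarith
  have hpos : (0 : ℝ) < q / (5 * q - 4) := by positivity
  have hlt : (q : ℝ) / (5 * q - 4) < 1 := by rw [div_lt_one hd]; linarith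
  have s0 := Real.sqrt_pos.2 hpos
  have s1 : Real.sqrt ((q : ℝ) / (5 * q - 4)) < 1 := by
    rw [Real.sqrt_lt' one_pos]; simpa using hlt
  have s2 := Real.sq_sqrt hpos.le
  unfold rhoStar
  set t := Real.sqrt ((q : ℝ) / (5 * q - 4))
  refine ⟨by linarith, by linarith, ?_⟩
  have e1 : 1 / 2 * (1 - t) * (1 - 1 / 2 * (1 - t)) = (1 - t ^ 2) / 4 := by ring
  have e2 : (1 - 2 * (1 / 2 * (1 - t))) ^ 2 = t ^ 2 := by ring
  rw [e1, e2, s2]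
  have hq0 : (q : ℝ) ≠ 0 := by linarith
  have hd0 : 5 * (q : ℝ) - 4 ≠ 0 := hd.ne'
  have e3 : 1 - (q : ℝ) / (5 * q - 4) = 4 * (q - 1) / (5 * q - 4) := by
    rw [eq_div_iff hd0, sub_mul, div_mul_cancel₀ _ hd0]; ring
  rw [e3, div_mul_div_comm, mul_comm (q : ℝ) (q - 1), mul_div_mul_right _ _ hq0]
  ring

theorem stmt17 (q : ℕ) (hq : 2 ≤ q) (ρ : ℝ) (hρ : ρ ∈ Set.Icc (0 : ℝ) (1 / 2)) :
    Filter.Tendsto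
      (fun n : ℕ => Real.logb 2 (Tq q n ⌊ρ * (n : ℝ)⌋₊) / n)
      Filter.atTop
      (nhds (if ρ ≤ rhoStar q then alphaFun q ρ else alphaFun q (rhoStar q))) := by
  obtain ⟨hρ0, hρ1⟩ := hρ
  obtain ⟨r0, r1, r2⟩ := rhoStar_spec q hq
  have hq2 : (2 : ℝ) ≤ q := by exact_mod_cast hq
  have hw : 0 < ((q : ℝ) - 1) / q := div_pos (by linarith) (by linarith)
  have hl2 : Real.log 2 ≠ 0 := (Real.log_pos (by norm_num)).ne'
  have main : ∀ σ : ℝ, 0 ≤ σ → σ ≤ ρ → σ ≤ rhoStar q → (ρ = σ ∨ σ = rhoStar q) →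
      Tendsto (fun n : ℕ => Real.logb 2 (Tq q n ⌊ρ * (n : ℝ)⌋₊) / n) atTop
        (𝓝 (alphaFun q σ)) := by
    intro σ h0 h1 h2 h3
    -- `σ(1-σ)` increases and `(1-2σ)²` decreases on `[0,1/2]`, with equality at `rhoStar q`.
    have hg : σ * (1 - σ) ≤ (1 - 2 * σ) ^ 2 * (((q : ℝ) - 1) / q) := by
      have a : σ * (1 - σ) ≤ rhoStar q * (1 - rhoStar q) := by nlinarith
      have b : (1 - 2 * rhoStar q) ^ 2 ≤ (1 - 2 * σ) ^ 2 := by nlinarith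
      calc _ ≤ _ := a
        _ = _ := r2
        _ ≤ _ := by gcongr
    have ht := tendsto_wsum hw hρ1 h0 h1 (by linarith) hg (h3.imp id fun e => by rw [e]; exact r2)
    have hα : alphaFun q σ = (Real.log q + (chooseExp σ + σ * Real.log (((q : ℝ) - 1) / q))) /
        Real.log 2 := by
      rw [eq_div_iff hl2, alphaFun_eq q hq σ h0 (by linarith)]
    rw [hα]
    refine ((ht.const_add (Real.log q)).div_const (Real.log 2)).congr' ?_
    filter_upwards [eventually_gt_atTop 0] with n hn
    have hn' : (n : ℝ) ≠ 0 := by exact_mod_cast hn.ne'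
    have hT : (Tq q n ⌊ρ * (n : ℝ)⌋₊ : ℝ) =
        (q : ℝ) ^ n * wsum (((q : ℝ) - 1) / q) n ⌊ρ * (n : ℝ)⌋₊ := Tq_eq q n _ hq
    rw [hT, Real.logb, Real.log_mul (by positivity) (wsum_pos hw _ _).ne', Real.log_pow]
    field_simp
  split_ifs with h
  · exact main ρ hρ0 le_rfl h (Or.inl rfl)
  · exact main (rhoStar q) r0.le (not_le.1 h).le le_rfl (Or.inr rfl)
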